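/- (Characterization of strong decomposability.) Let C be a contribution profile and let δ ∈ Δ(|C|). Then δ is strongly decomposable if and only if for every subset S ⊆ N: Σ_{x ∈ A : ∃ i ∈ S with u_i(x) ≥ u_i(y) for all y ∈ A} δ(x) ≥ Σ_{i∈S} C_i. -/

import Mathlib

/-!
This is a fractional Hall theorem, with the optimal projects of an agent as her admissible ones.
Necessity is a count: the agents in `S` spend only on projects admissible for some member of `S`.

For sufficiency, the totals `∑ i, f i` of admissible spending plans `f` form a compact convex set,
a Minkowski sum with one summand per agent. Take the total nearest to `δ`. The variational
inequality of the projection splits over the summands: each `f i` minimizes the pairing with the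
excess `∑ j, f j - δ` among the distributions available to agent `i`, so she spends only where the
excess is least among her admissible projects. If the largest excess were positive, consider the
set `T` of projects attaining it and the set `S` of agents spending on `T`. Everything admissible
for `S` lies in `T`, yet `S` pays for all the spending on `T`, which exceeds the amount `δ` puts
there, against the inequality for `S`. Hence no excess is positive, and since the excesses sum to
zero they all vanish.
-/

open Finset

/-- A distribution of value `V`: nonnegative and sums to `V`. -/
def IsDistribution {A : Type*} [Fintype A] (δ : A → ℝ) (V : ℝ) : Prop :=
  (∀ x, 0 ≤ δ x) ∧ ∑ x, δ x = V

/-- Agent's (linear) utility of a distribution. -/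
def util {A : Type*} [Fintype A] (u : A → ℝ) (δ : A → ℝ) : ℝ :=
  ∑ x, δ x * u x

/-- The Nash product of a distribution (real exponentiation, `0 ^ 0 = 1`). -/
noncomputable def nashProduct {A N : Type*} [Fintype A] [Fintype N]
    (u : N → A → ℝ) (C : N → ℝ) (δ : A → ℝ) : ℝ :=
  ∏ i, (util (u i) δ) ^ (C i)

/-- A Nash distribution for contribution profile `C`: a maximizer of the Nash
product over `Δ(|C|)`. -/
def IsNashDistribution {A N : Type*} [Fintype A] [Fintype N]
    (u : N → A → ℝ) (C : N → ℝ) (δ : A → ℝ) : Prop :=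
  IsDistribution δ (∑ i, C i) ∧
    ∀ δ' : A → ℝ, IsDistribution δ' (∑ i, C i) →
      nashProduct u C δ' ≤ nashProduct u C δ

open scoped Classical

/-- Strong decomposability: each agent's individual distribution spends only on
her maximum-utility projects. -/
def StronglyDecomposable {A N : Type*} [Fintype A] [Fintype N]
    (u : N → A → ℝ) (C : N → ℝ) (δ : A → ℝ) : Prop :=
  ∃ δi : N → A → ℝ, (∀ i, IsDistribution (δi i) (C i)) ∧
    (∀ x, δ x = ∑ i, δi i x) ∧
    ∀ i x, 0 < δi i x → ∀ y, u i y ≤ u i x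

section NearestSum

variable {ι E : Type*} [Fintype ι] [NormedAddCommGroup E] [InnerProductSpace ℝ E]

lemma exists_isMinOn_inner_sum_sub {K : ι → Set E} (hne : ∀ i, (K i).Nonempty)
    (hcpt : ∀ i, IsCompact (K i)) (hconv : ∀ i, Convex ℝ (K i)) (p : E) :
    ∃ f : ι → E, (∀ i, f i ∈ K i) ∧
      ∀ i, IsMinOn (fun g => inner ℝ (∑ j, f j - p) g) (K i) (f i) := by
  set M : Set E := (fun f : ι → E => ∑ i, f i) '' Set.univ.pi K
  have hM_ne : M.Nonempty := (Set.univ_pi_nonempty_iff.2 hne).image _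
  have hM_cpt : IsCompact M := (isCompact_univ_pi hcpt).image (by fun_prop)
  have hM_conv : Convex ℝ M := (convex_pi fun i _ => hconv i).is_linear_image
    ⟨fun f g => by simp [sum_add_distrib], fun c f => by simp [smul_sum]⟩
  obtain ⟨v, hv, hv_min⟩ := exists_norm_eq_iInf_of_complete_convex hM_ne hM_cpt.isComplete hM_conv p
  have hv_inner := (norm_eq_iInf_iff_real_inner_le_zero hM_conv hv).1 hv_min
  obtain ⟨f, hf, rfl⟩ := hv
  refine ⟨f, fun i => hf i trivial, fun i => isMinOn_iff.2 fun g hg => ?_⟩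
  have hexchange : ∑ j, Function.update f i g j - ∑ j, f j = g - f i := by
    rw [sum_update_of_mem (mem_univ i), sum_eq_add_sum_sdiff_singleton_of_mem (mem_univ i) f]
    abel
  have hupdate := hv_inner _ ⟨Function.update f i g, (Set.update_mem_pi_iff_of_mem hf).2
    fun _ => hg, rfl⟩
  rw [hexchange, ← neg_sub, inner_neg_left, inner_sub_right] at hupdate
  linarith

lemma exists_isMinOn_sum_sub_dotProduct {A : Type*} [Fintype A] {K : ι → Set (A → ℝ)}
    (hne : ∀ i, (K i).Nonempty) (hcpt : ∀ i, IsCompact (K i)) (hconv : ∀ i, Convex ℝ (K i))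
    (p : A → ℝ) :
    ∃ f : ι → A → ℝ, (∀ i, f i ∈ K i) ∧
      ∀ i, IsMinOn (fun g => (∑ j, f j - p) ⬝ᵥ g) (K i) (f i) := by
  let e := EuclideanSpace.equiv A ℝ
  obtain ⟨f, hf, hmin⟩ := exists_isMinOn_inner_sum_sub (K := fun i => e ⁻¹' K i)
    (fun i => (hne i).preimage e.surjective)
    (fun i => e.toHomeomorph.isCompact_preimage.2 (hcpt i))
    (fun i => (hconv i).linear_preimage e.toLinearMap) (e.symm p)
  refine ⟨fun i => e (f i), hf, fun i => isMinOn_iff.2 fun g hg => ?_⟩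
  have hinner (v w : EuclideanSpace ℝ A) : inner ℝ v w = e v ⬝ᵥ e w := by
    rw [EuclideanSpace.inner_eq_star_dotProduct, star_trivial, dotProduct_comm]
    rfl
  have hle := isMinOn_iff.1 (hmin i) (e.symm g) (by simpa using hg)
  simpa only [hinner, map_sub, map_sum, e.apply_symm_apply] using hle

end NearestSum

section DistributionsOn

variable {A : Type*} [Fintype A] {s : Set A} {V : ℝ} {f : A → ℝ}

/-- The distributions of value `V` supported on `s`: the ways an agent with contribution `V` can
spend on the projects in `s` only. -/
def distributionsOn (s : Set A) (V : ℝ) : Set (A → ℝ) :=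
  {f | IsDistribution f V ∧ ∀ x ∉ s, f x = 0}

lemma single_mem_distributionsOn {y : A} (hV : 0 ≤ V) (hy : y ∈ s) :
    Pi.single y V ∈ distributionsOn s V :=
  ⟨⟨Pi.le_def.1 ((Pi.single_nonneg (α := fun _ => ℝ)).2 hV), by simp⟩,
    fun _ hx => Pi.single_eq_of_ne (ne_of_mem_of_not_mem hy hx).symm _⟩

lemma distributionsOn_nonempty (hV : 0 ≤ V) (hs : 0 < V → s.Nonempty) :
    (distributionsOn s V).Nonempty := by
  obtain rfl | hV_pos := hV.eq_or_lt
  · exact ⟨0, ⟨fun _ => le_rfl, by simp⟩, fun _ _ => rfl⟩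
  · obtain ⟨y, hy⟩ := hs hV_pos
    exact ⟨Pi.single y V, single_mem_distributionsOn hV hy⟩

lemma convex_distributionsOn (s : Set A) (V : ℝ) : Convex ℝ (distributionsOn s V) := by
  rintro f ⟨⟨hf_nonneg, hf_sum⟩, hf_off⟩ g ⟨⟨hg_nonneg, hg_sum⟩, hg_off⟩ a b ha hb hab
  refine ⟨⟨fun x => ?_, ?_⟩, fun x hx => by simp [hf_off x hx, hg_off x hx]⟩
  · exact add_nonneg (mul_nonneg ha (hf_nonneg x)) (mul_nonneg hb (hg_nonneg x))
  · simp only [Pi.add_apply, Pi.smul_apply, smul_eq_mul, sum_add_distrib, ← mul_sum, hf_sum,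
      hg_sum, ← add_mul, hab, one_mul]

lemma isCompact_distributionsOn (s : Set A) (V : ℝ) : IsCompact (distributionsOn s V) := by
  have hclosed : IsClosed (distributionsOn s V) := by
    simp only [distributionsOn, IsDistribution, Set.ofPred_and, Set.ofPred_forall]
    refine .inter (.inter ?_ ?_) ?_
    · exact isClosed_iInter fun x => isClosed_le continuous_const (continuous_apply x)
    · exact isClosed_eq (by fun_prop) continuous_const
    · exact isClosed_iInter fun x => isClosed_iInter fun _ =>
        isClosed_eq (continuous_apply x) continuous_const
  refine (isCompact_Icc (a := (0 : A → ℝ)) (b := fun _ => V)).of_isClosed_subset hclosed ?_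
  rintro f ⟨⟨hf_nonneg, hf_sum⟩, -⟩
  exact ⟨hf_nonneg, fun x => hf_sum ▸ single_le_sum (fun y _ => hf_nonneg y) (mem_univ x)⟩

lemma sum_le_of_mem_distributionsOn (hf : f ∈ distributionsOn s V) (T : Finset A) :
    ∑ x ∈ T, f x ≤ V :=
  hf.1.2 ▸ sum_le_univ_sum_of_nonneg hf.1.1

lemma sum_eq_of_mem_distributionsOn {T : Finset A} (hf : f ∈ distributionsOn s V) (hsT : s ⊆ T) :
    ∑ x ∈ T, f x = V :=
  hf.1.2 ▸ sum_subset (subset_univ T) fun x _ hx => hf.2 x fun hxs => hx (hsT hxs)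

lemma le_of_isMinOn_dotProduct_distributionsOn {w : A → ℝ} (hf : f ∈ distributionsOn s V)
    (hmin : IsMinOn (fun g => w ⬝ᵥ g) (distributionsOn s V) f) {x y : A} (hx : f x ≠ 0)
    (hy : y ∈ s) : w x ≤ w y := by
  have hxs : x ∈ s := by_contra fun h => hx (hf.2 x h)
  obtain ⟨z, hz, hz_min⟩ := Set.exists_min_image s w s.toFinite ⟨x, hxs⟩
  have hV : 0 ≤ V := hf.1.2 ▸ sum_nonneg fun v _ => hf.1.1 v
  have hloss_nonneg : ∀ v ∈ univ, 0 ≤ (w v - w z) * f v := fun v _ => by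
    by_cases hv : v ∈ s
    · exact mul_nonneg (sub_nonneg.2 (hz_min v hv)) (hf.1.1 v)
    · simp [hf.2 v hv]
  have hloss_nonpos : ∑ v, (w v - w z) * f v ≤ 0 :=
    calc ∑ v, (w v - w z) * f v = w ⬝ᵥ f - w ⬝ᵥ Pi.single z V := by
          rw [dotProduct_single]
          simp only [dotProduct, sub_mul, sum_sub_distrib, ← mul_sum, hf.1.2]
      _ ≤ 0 := sub_nonpos.2 (isMinOn_iff.1 hmin _ (single_mem_distributionsOn hV hz))
  have hloss_zero : (w x - w z) * f x = 0 :=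
    (sum_eq_zero_iff_of_nonneg hloss_nonneg).1
      (hloss_nonpos.antisymm (sum_nonneg hloss_nonneg)) x (mem_univ x)
  have hxz : w x = w z := sub_eq_zero.1 ((mul_eq_zero.1 hloss_zero).resolve_right hx)
  exact hxz ▸ hz_min y hy

end DistributionsOn

section Decomposition

variable {A N : Type*} [Fintype A] {s : N → Set A} {C : N → ℝ} {δ : A → ℝ} {f : N → A → ℝ}

lemma distributionsOn_nonempty_of_hall (hC : ∀ i, 0 ≤ C i)
    (hall : ∀ S : Finset N, ∑ i ∈ S, C i ≤ ∑ x with ∃ i ∈ S, x ∈ s i, δ x) (i : N) :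
    (distributionsOn (s i) (C i)).Nonempty := by
  refine distributionsOn_nonempty (hC i) fun hpos => ?_
  have hneighbours : 0 < ∑ x with x ∈ s i, δ x := hpos.trans_le (by simpa using hall {i})
  obtain ⟨x, hx⟩ := nonempty_of_sum_ne_zero hneighbours.ne'
  exact ⟨x, (mem_filter_univ x).1 hx⟩

variable [Fintype N]

lemma sum_contributions_le_sum_spending {S : Finset N} {T : Finset A}
    (hf : ∀ i, f i ∈ distributionsOn (s i) (C i)) (hST : ∀ i ∈ S, s i ⊆ T) :
    ∑ i ∈ S, C i ≤ ∑ x ∈ T, ∑ i, f i x :=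
  calc ∑ i ∈ S, C i = ∑ i ∈ S, ∑ x ∈ T, f i x :=
        sum_congr rfl fun i hi => (sum_eq_of_mem_distributionsOn (hf i) (hST i hi)).symm
    _ = ∑ x ∈ T, ∑ i ∈ S, f i x := sum_comm
    _ ≤ ∑ x ∈ T, ∑ i, f i x :=
        sum_le_sum fun x _ => sum_le_univ_sum_of_nonneg fun i => (hf i).1.1 x

lemma hall_of_decomposition (hf : ∀ i, f i ∈ distributionsOn (s i) (C i)) (S : Finset N) :
    ∑ i ∈ S, C i ≤ ∑ x with ∃ i ∈ S, x ∈ s i, (∑ i, f i) x := by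
  simp only [Finset.sum_apply]
  exact sum_contributions_le_sum_spending hf fun i hi x hx => by simpa using ⟨i, hi, hx⟩

lemma sum_spending_le_sum_contributions {S : Finset N} {T : Finset A}
    (hf : ∀ i, f i ∈ distributionsOn (s i) (C i)) (hST : ∀ x ∈ T, ∀ i ∉ S, f i x = 0) :
    ∑ x ∈ T, ∑ i, f i x ≤ ∑ i ∈ S, C i :=
  calc ∑ x ∈ T, ∑ i, f i x = ∑ x ∈ T, ∑ i ∈ S, f i x :=
        sum_congr rfl fun x hx => (sum_subset (subset_univ S) fun i _ hi => hST x hx i hi).symm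
    _ = ∑ i ∈ S, ∑ x ∈ T, f i x := sum_comm
    _ ≤ ∑ i ∈ S, C i := sum_le_sum fun i _ => sum_le_of_mem_distributionsOn (hf i) T

lemma exists_balanced_spending (hne : ∀ i, (distributionsOn (s i) (C i)).Nonempty) (δ : A → ℝ) :
    ∃ f : N → A → ℝ, (∀ i, f i ∈ distributionsOn (s i) (C i)) ∧
      ∀ i x y, f i x ≠ 0 → y ∈ s i → (∑ j, f j - δ) x ≤ (∑ j, f j - δ) y := by
  obtain ⟨f, hf, hmin⟩ := exists_isMinOn_sum_sub_dotProduct hne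
    (fun i => isCompact_distributionsOn (s i) (C i))
    (fun i => convex_distributionsOn (s i) (C i)) δ
  exact ⟨f, hf, fun i x y hx hy => le_of_isMinOn_dotProduct_distributionsOn (hf i) (hmin i) hx hy⟩

lemma sum_le_of_balanced_of_hall (hf : ∀ i, f i ∈ distributionsOn (s i) (C i)) (hδ : ∀ x, 0 ≤ δ x)
    (hbal : ∀ i x y, f i x ≠ 0 → y ∈ s i → (∑ j, f j - δ) x ≤ (∑ j, f j - δ) y)
    (hall : ∀ S : Finset N, ∑ i ∈ S, C i ≤ ∑ x with ∃ i ∈ S, x ∈ s i, δ x) :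
    ∑ i, f i ≤ δ := by
  set excess : A → ℝ := ∑ i, f i - δ with hexcess
  suffices ∀ x, excess x ≤ 0 from fun x => sub_nonpos.1 (this x)
  by_contra! ⟨x₁, hx₁⟩
  obtain ⟨x₀, -, hx₀⟩ := exists_max_image univ excess ⟨x₁, mem_univ x₁⟩
  set T : Finset A := {x | excess x = excess x₀}
  set S : Finset N := {i | ∃ x ∈ T, f i x ≠ 0}
  have hneighbours : ({x | ∃ i ∈ S, x ∈ s i} : Finset A) ⊆ T := by
    intro y hy
    obtain ⟨i, hi, hyi⟩ := (mem_filter_univ y).1 hy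
    obtain ⟨x, hxT, hfx⟩ := (mem_filter_univ i).1 hi
    exact (mem_filter_univ y).2 <| (hx₀ y (mem_univ y)).antisymm <|
      (mem_filter_univ x).1 hxT ▸ hbal i x y hfx hyi
  have hoverspent : ∀ x ∈ T, δ x < ∑ i, f i x := fun x hx => by
    have hpos : 0 < excess x := (mem_filter_univ x).1 hx ▸ hx₁.trans_le (hx₀ x₁ (mem_univ x₁))
    simpa [hexcess] using hpos
  refine lt_irrefl (∑ i ∈ S, C i) ?_
  calc ∑ i ∈ S, C i ≤ ∑ x with ∃ i ∈ S, x ∈ s i, δ x := hall S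
    _ ≤ ∑ x ∈ T, δ x := sum_le_sum_of_subset_of_nonneg hneighbours fun x _ _ => hδ x
    _ < ∑ x ∈ T, ∑ i, f i x :=
        sum_lt_sum_of_nonempty ⟨x₀, (mem_filter_univ x₀).2 rfl⟩ hoverspent
    _ ≤ ∑ i ∈ S, C i := sum_spending_le_sum_contributions hf fun x hx i hi =>
        by_contra fun hne => hi ((mem_filter_univ i).2 ⟨x, hx, hne⟩)

theorem strongly_decomposable_iff_hall_general (s : N → Set A) (hC : ∀ i, 0 ≤ C i)
    (hδ : IsDistribution δ (∑ i, C i)) :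
    (∃ f : N → A → ℝ, (∀ i, f i ∈ distributionsOn (s i) (C i)) ∧ ∑ i, f i = δ) ↔
      ∀ S : Finset N, ∑ i ∈ S, C i ≤ ∑ x with ∃ i ∈ S, x ∈ s i, δ x := by
  refine ⟨?_, fun hall => ?_⟩
  · rintro ⟨f, hf, rfl⟩
    exact hall_of_decomposition hf
  · obtain ⟨f, hf, hbal⟩ :=
      exists_balanced_spending (distributionsOn_nonempty_of_hall hC hall) δ
    have hle : ∑ i, f i ≤ δ := sum_le_of_balanced_of_hall hf hδ.1 hbal hall
    have htotal : ∑ x, (∑ i, f i) x = ∑ x, δ x := by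
      simp only [Finset.sum_apply, hδ.2]
      rw [sum_comm]
      exact sum_congr rfl fun i _ => (hf i).1.2
    have heq := (sum_eq_sum_iff_of_le fun x _ => hle x).1 htotal
    exact ⟨f, hf, funext fun x => heq x (mem_univ x)⟩

lemma stronglyDecomposable_iff_exists_mem_distributionsOn {u : N → A → ℝ} :
    StronglyDecomposable u C δ ↔
      ∃ f : N → A → ℝ, (∀ i, f i ∈ distributionsOn {x | ∀ y, u i y ≤ u i x} (C i)) ∧
        ∑ i, f i = δ := by
  constructor
  · rintro ⟨f, hf, hsum, hopt⟩
    refine ⟨f, fun i => ⟨hf i, fun x hx => ?_⟩, funext fun x => by simp [hsum x]⟩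
    exact ((hf i).1 x).eq_or_lt.elim Eq.symm fun hpos => absurd (hopt i x hpos) hx
  · rintro ⟨f, hf, rfl⟩
    refine ⟨f, fun i => (hf i).1, fun x => Finset.sum_apply x univ f, fun i x hpos => ?_⟩
    exact by_contra fun hx => hpos.ne' ((hf i).2 x hx)

end Decomposition

theorem strongly_decomposable_iff_hall {A N : Type*} [Fintype A] [Nonempty A] [Fintype N]
    (u : N → A → ℝ) (hu : ∀ i x, 0 ≤ u i x)
    (C : N → ℝ) (hC : ∀ i, 0 ≤ C i)
    (δ : A → ℝ) (hδ : IsDistribution δ (∑ i, C i)) :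
    StronglyDecomposable u C δ ↔
      ∀ S : Finset N,
        (∑ i ∈ S, C i) ≤
          ∑ x ∈ Finset.univ.filter (fun x => ∃ i ∈ S, ∀ y, u i y ≤ u i x), δ x := by
  simpa only [Set.mem_ofPred_eq] using stronglyDecomposable_iff_exists_mem_distributionsOn.trans
    (strongly_decomposable_iff_hall_general (fun i => {x | ∀ y, u i y ≤ u i x}) hC hδ)
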